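/- Let $m,n \in \mathbb{N}$. A symmetric tensor $\mathcal{A} = (a_{i_1\dots i_m})$ is GDD$^+$ (generalized diagonally dominant with nonnegative diagonal) if and only if there exist nonnegative reals $b^{\vec{i}}_j$ for each nondecreasing non-constant multi-index $\vec{i} = (i_1,\dots,i_m)$ and each $j \in \{i_1,\dots,i_m\}$, such that: (i) for each such $\vec{i}$ with tight pair $((j_1,\dots,j_l),(\alpha_1,\dots,\alpha_l))$, $\prod_{k=1}^l (b^{\vec{i}}_{j_k})^{\alpha_k} \geq c(\vec{i}) |a_{\vec{i}}|^m$ with $c(\vec{i}) = \prod_{k=1}^l \binom{m-1}{\alpha - e_k}^{\alpha_k}$; and (ii) for each $j \in [n]$, $a_{jj\dots j} \geq \sum_{\vec{i}: j \in \vec{i}} b^{\vec{i}}_j$. -/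

import Mathlib

open Finset

/-- An index of an `m`-order `n`-dimensional tensor. -/
abbrev Idx (m n : ℕ) := Fin m → Fin n

/-- The diagonal index `(i, i, …, i)`. -/
def diagIdx {m n : ℕ} (i : Fin n) : Idx m n := fun _ => i

/-- A tensor is symmetric if its entries are invariant under permutations of the indices. -/
def IsSymmetric {m n : ℕ} (A : Idx m n → ℝ) : Prop :=
  ∀ (σ : Equiv.Perm (Fin m)) (j : Idx m n), A (j ∘ σ) = A j

/-- The sum of the absolute values of the off-diagonal entries on the `i`-th slice. -/
def rowSum {m n : ℕ} (hm : 0 < m) (A : Idx m n → ℝ) (i : Fin n) : ℝ :=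
  ∑ j ∈ Finset.univ.filter (fun j : Idx m n => j ⟨0, hm⟩ = i ∧ j ≠ diagIdx i), |A j|

/-- A tensor is diagonally dominant if each diagonal entry dominates (in absolute value)
the sum of the absolute values of the off-diagonal entries on its slice. -/
def IsDD {m n : ℕ} (hm : 0 < m) (A : Idx m n → ℝ) : Prop :=
  ∀ i : Fin n, rowSum hm A i ≤ |A (diagIdx i)|

/-- `A` is a symmetric generalized diagonally dominant tensor with nonnegative diagonal:
there is a positive diagonal scaling making it diagonally dominant. -/
def IsGDDplus {m n : ℕ} (hm : 0 < m) (A : Idx m n → ℝ) : Prop :=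
  IsSymmetric A ∧ (∀ i : Fin n, 0 ≤ A (diagIdx i)) ∧
    ∃ d : Fin n → ℝ, (∀ i, 0 < d i) ∧ IsDD hm (fun j => A j * ∏ k : Fin m, d (j k))

/-- The set of distinct values appearing in the multi-index `jh` (the tight index). -/
def suppIdx {m n : ℕ} (jh : Idx m n) : Finset (Fin n) := Finset.image jh Finset.univ

/-- The multiplicity of the value `p` in the multi-index `jh` (the tight power). -/
def multIdx {m n : ℕ} (jh : Idx m n) (p : Fin n) : ℕ :=
  (Finset.univ.filter fun k : Fin m => jh k = p).card

/-- The constant `c = ∏_k (m-1 choose α - e_k)^{α_k}` associated with a multi-index. -/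
def cCoef {m n : ℕ} (jh : Idx m n) : ℕ :=
  ∏ p ∈ suppIdx jh,
    (Nat.multinomial (suppIdx jh)
      (fun q => if q = p then multIdx jh q - 1 else multIdx jh q)) ^ (multIdx jh p)

/-!
If `A` becomes diagonally dominant after scaling by `d`, let `b j p` be the contribution of the
rearrangements of `j` to slice `p` of the scaled tensor, divided by `d p ^ m`; counting
rearrangements gives equality in the power-cone inequality.

Conversely, weighted AM-GM on each multi-index `j` shows that
`∑ aᵢ xᵢᵐ - ∑ |a_{j₁…jₘ}| x_{j₁} ⋯ x_{jₘ}`, the second sum running over off-diagonal entries, is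
nonnegative for `x > 0`. With `ε` added to the diagonal and the barrier `-m ∑ log xᵢ` to the form,
a minimiser exists in the coordinates `log x`, and its critical equations say that scaling by `x`
makes the perturbed tensor strictly diagonally dominant. As `ε → 0` the scalings may diverge, but
the factors `∏ₖ x_{jₖ} / x_{j₀}ᵐ` by which they act on the nonzero entries do not: the slice sums
bound them above, and bounds below follow because the factors of an entry with each of its indices
moved to the front multiply to `1`. Their logarithms depend linearly on `log x`, so they range over
a closed subspace, and a limit of them comes from an actual scaling.
-/

lemma succ_mul_multinomial_update {ι : Type*} [DecidableEq ι] {s : Finset ι} {p : ι}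
    (hp : p ∈ s) (f : ι → ℕ) :
    (f p + 1) * Nat.multinomial s (Function.update f p (f p + 1)) =
      (∑ q ∈ s, f q + 1) * Nat.multinomial s f := by
  have hprod : ∏ q ∈ s, (Function.update f p (f p + 1) q).factorial =
      (f p + 1) * ∏ q ∈ s, (f q).factorial := by
    rw [← mul_prod_erase s _ hp, ← mul_prod_erase s (fun q => (f q).factorial) hp,
      Function.update_self, Nat.factorial_succ, mul_assoc]
    congr 2
    exact prod_congr rfl fun q hq => by rw [Function.update_of_ne (ne_of_mem_erase hq)]
  have hsum : ∑ q ∈ s, Function.update f p (f p + 1) q = ∑ q ∈ s, f q + 1 := by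
    rw [sum_update_of_mem hp, ← erase_eq, ← add_sum_erase s f hp]
    ring
  have hspec := Nat.multinomial_spec s (Function.update f p (f p + 1))
  rw [hprod, hsum, Nat.factorial_succ, ← Nat.multinomial_spec s f] at hspec
  have hpos : 0 < ∏ q ∈ s, (f q).factorial := prod_pos fun q _ => (f q).factorial_pos
  refine Nat.eq_of_mul_eq_mul_left hpos ?_
  linear_combination hspec

lemma prod_le_arith_mean_pow_card {ι : Type*} {s : Finset ι} (hs : s.Nonempty) {z : ι → ℝ}
    (hz : ∀ i ∈ s, 0 ≤ z i) : ∏ i ∈ s, z i ≤ ((∑ i ∈ s, z i) / #s) ^ #s := by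
  have hcard : 0 < ∑ _i ∈ s, (1 : ℝ) := by simpa using hs
  have hmean := Real.geom_mean_le_arith_mean s (fun _ => 1) z (fun _ _ => zero_le_one) hcard hz
  simp only [Real.rpow_one, one_mul, sum_const, nsmul_eq_mul, mul_one] at hmean
  calc ∏ i ∈ s, z i = ((∏ i ∈ s, z i) ^ (#s : ℝ)⁻¹) ^ #s :=
        (Real.rpow_inv_natCast_pow (prod_nonneg hz) hs.card_ne_zero).symm
    _ ≤ _ := pow_le_pow_left₀ (Real.rpow_nonneg (prod_nonneg hz) _) hmean _

lemma abs_sub_two_div_le_mul_exp_sub {ε : ℝ} (hε : 0 < ε) (s : ℝ) :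
    |s| - 2 / ε ≤ ε * Real.exp s - s := by
  have hdiv : 0 < 2 / ε := by positivity
  rcases le_total 0 s with hs | hs
  · have hexp : ε * (s ^ 2 / 2) ≤ ε * Real.exp s := by
      gcongr
      linarith [Real.quadratic_le_exp_of_nonneg hs]
    have hsquare : ε * (s ^ 2 / 2) - 2 * s + 2 / ε = (ε * s - 2) ^ 2 / (2 * ε) := by
      field_simp
      ring
    have hsquare_nonneg : 0 ≤ (ε * s - 2) ^ 2 / (2 * ε) := by positivity
    rw [abs_of_nonneg hs]
    linarith
  · have hexp : 0 < ε * Real.exp s := by positivity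
    rw [abs_of_nonpos hs]
    linarith

section MultiIndex

variable {m n : ℕ}

/-- The number `m! / ∏ αₖ!` of distinct rearrangements of a multi-index. -/
def rearrCount (j : Idx m n) : ℕ := Nat.multinomial (suppIdx j) (multIdx j)

/-- The multinomial coefficient `(m-1 choose α - eₚ)`, for `p` occurring in `j`: the number of
distinct rearrangements of `j` whose first entry is `p`. -/
def rearrCountAt (j : Idx m n) (p : Fin n) : ℕ :=
  Nat.multinomial (suppIdx j) fun q => if q = p then multIdx j q - 1 else multIdx j q

lemma apply_mem_suppIdx (j : Idx m n) (k : Fin m) : j k ∈ suppIdx j :=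
  mem_image_of_mem j (mem_univ k)

lemma multIdx_pos_iff {j : Idx m n} {p : Fin n} : 0 < multIdx j p ↔ p ∈ suppIdx j := by
  simp [multIdx, suppIdx, card_pos, Finset.Nonempty]

lemma multIdx_comp_perm (j : Idx m n) (σ : Equiv.Perm (Fin m)) :
    multIdx (j ∘ σ) = multIdx j := by
  funext p
  exact card_equiv σ (by simp)

lemma prod_suppIdx_pow_multIdx {M : Type*} [CommMonoid M] (j : Idx m n) (f : Fin n → M) :
    ∏ p ∈ suppIdx j, f p ^ multIdx j p = ∏ k, f (j k) :=
  (prod_comp f j).symm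

lemma sum_suppIdx_multIdx_nsmul {M : Type*} [AddCommMonoid M] (j : Idx m n) (f : Fin n → M) :
    ∑ p ∈ suppIdx j, multIdx j p • f p = ∑ k, f (j k) :=
  (sum_comp f j).symm

lemma sum_suppIdx_multIdx (j : Idx m n) : ∑ p ∈ suppIdx j, multIdx j p = m := by
  simpa using sum_suppIdx_multIdx_nsmul j fun _ => (1 : ℕ)

lemma sum_suppIdx_eq_sum_div (j : Idx m n) (f : Fin n → ℝ) :
    ∑ p ∈ suppIdx j, f p = ∑ k, f (j k) / multIdx j (j k) := by
  rw [← sum_suppIdx_multIdx_nsmul j fun p => f p / multIdx j p]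
  refine sum_congr rfl fun p hp => ?_
  have hpos := multIdx_pos_iff.2 hp
  rw [nsmul_eq_mul]
  field_simp

lemma cCoef_eq_prod_rearrCountAt (j : Idx m n) : cCoef j = ∏ k, rearrCountAt j (j k) :=
  prod_suppIdx_pow_multIdx j (rearrCountAt j)

lemma multIdx_mul_rearrCount {j : Idx m n} {p : Fin n} (hp : p ∈ suppIdx j) :
    multIdx j p * rearrCount j = m * rearrCountAt j p := by
  set f : Fin n → ℕ := fun q => if q = p then multIdx j q - 1 else multIdx j q with hf
  have hfp : f p + 1 = multIdx j p := by
    have := multIdx_pos_iff.2 hp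
    simp only [hf, if_true]
    omega
  have hupdate : Function.update f p (f p + 1) = multIdx j := by
    funext q
    by_cases hq : q = p
    · rw [hq, Function.update_self, hfp]
    · simp only [Function.update_of_ne hq, hf, if_neg hq]
  have hsum : ∑ q ∈ suppIdx j, f q + 1 = m := by
    have hmult := sum_suppIdx_multIdx j
    rw [← hupdate, sum_update_of_mem hp, ← erase_eq] at hmult
    rw [← add_sum_erase _ f hp]
    linarith
  have h := succ_mul_multinomial_update hp f
  rwa [hupdate, hfp, hsum] at h

open scoped DomMulAct in
lemma ncard_orbit_eq_rearrCount (j : Idx m n) :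
    (MulAction.orbit (Equiv.Perm (Fin m))ᵈᵐᵃ j).ncard = rearrCount j := by
  have hstab : Nat.card (MulAction.stabilizer (Equiv.Perm (Fin m))ᵈᵐᵃ j) =
      ∏ p ∈ suppIdx j, (multIdx j p).factorial := by
    have hequiv : {σ : Equiv.Perm (Fin m) // j ∘ σ = j} ≃
        MulAction.stabilizer (Equiv.Perm (Fin m))ᵈᵐᵃ j :=
      DomMulAct.mk.subtypeEquiv fun _ => Iff.rfl
    rw [← Nat.card_congr hequiv, Nat.card_eq_fintype_card, DomMulAct.stabilizer_card']
    simp only [Fintype.card_subtype, suppIdx, multIdx]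
  have hcard := Nat.card_congr
    (MulAction.orbitProdStabilizerEquivGroup (Equiv.Perm (Fin m))ᵈᵐᵃ j)
  rw [Nat.card_prod, Nat.card_coe_set_eq, hstab, ← Nat.card_congr DomMulAct.mk, Nat.card_perm,
    Nat.card_fin] at hcard
  have hspec := Nat.multinomial_spec (suppIdx j) (multIdx j)
  rw [sum_suppIdx_multIdx, ← hcard, mul_comm] at hspec
  exact (Nat.eq_of_mul_eq_mul_right (prod_pos fun p _ => Nat.factorial_pos _) hspec).symm

lemma card_filter_comp_sort_eq {j : Idx m n} (hj : Monotone j) :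
    #{i : Idx m n | i ∘ Tuple.sort i = j} = rearrCount j := by
  rw [← ncard_orbit_eq_rearrCount, ← Set.ncard_coe_finset]
  congr 1
  ext i
  simp only [coe_filter, mem_univ, true_and, Set.mem_ofPred_eq, MulAction.mem_orbit_iff]
  constructor
  · rintro rfl
    refine ⟨DomMulAct.mk (Tuple.sort i)⁻¹, ?_⟩
    funext k
    simp [DomMulAct.smul_apply]
  · rintro ⟨σ, rfl⟩
    change (j ∘ (DomMulAct.mk.symm σ : Equiv.Perm (Fin m))) ∘
      Tuple.sort (j ∘ (DomMulAct.mk.symm σ : Equiv.Perm (Fin m))) = j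
    rw [Tuple.comp_perm_comp_sort_eq_comp_sort, Tuple.sort_eq_refl_iff_monotone.2 hj]
    rfl

end MultiIndex

section SymmetricSums

variable {m n : ℕ} {w : Idx m n → ℝ}

open scoped Classical in
/-- The nondecreasing non-constant multi-indices, one for each orbit of off-diagonal entries. -/
noncomputable def edges (m n : ℕ) : Finset (Idx m n) :=
  {j | Monotone j ∧ ¬ ∃ q, j = diagIdx q}

lemma mem_edges {j : Idx m n} : j ∈ edges m n ↔ Monotone j ∧ ¬ ∃ q, j = diagIdx q := by
  simp [edges]

/-- The sum of all entries in the `i`-th slice, the diagonal one included. -/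
def sliceSum (hm : 0 < m) (w : Idx m n → ℝ) (i : Fin n) : ℝ :=
  ∑ j with j ⟨0, hm⟩ = i, w j

lemma IsSymmetric.sum_eq_sum_edges (hw : IsSymmetric w) (hdiag : ∀ q, w (diagIdx q) = 0) :
    ∑ j, w j = ∑ j ∈ edges m n, rearrCount j * w j := by
  have hfiber (i : Idx m n) (hi : Monotone i) :
      ∑ j with j ∘ Tuple.sort j = i, w j = rearrCount i * w i := by
    rw [← card_filter_comp_sort_eq hi, ← nsmul_eq_mul, ← sum_const]
    refine sum_congr rfl fun j hj => ?_
    rw [← (mem_filter.1 hj).2, hw]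
  rw [← sum_fiberwise univ (fun j : Idx m n => j ∘ Tuple.sort j) w]
  symm
  refine sum_subset_zero_on_sdiff (subset_univ _) (fun i hi => ?_)
    fun i hi => (hfiber i (mem_edges.1 hi).1).symm
  by_cases hmono : Monotone i
  · obtain ⟨q, rfl⟩ : ∃ q, i = diagIdx q := by simpa [mem_edges, hmono] using hi
    rw [hfiber _ hmono, hdiag, mul_zero]
  · refine sum_eq_zero fun j hj => (hmono ?_).elim
    exact (mem_filter.1 hj).2 ▸ Tuple.monotone_sort j

lemma IsSymmetric.sum_multIdx_mul (hm : 0 < m) (hw : IsSymmetric w) (i : Fin n) :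
    ∑ j, multIdx j i * w j = m * sliceSum hm w i := by
  have hslot (k : Fin m) : ∑ j with j k = i, w j = sliceSum hm w i := by
    refine sum_equiv ((Equiv.swap k ⟨0, hm⟩).arrowCongr (Equiv.refl (Fin n))) (fun j => ?_)
      fun j _ => ?_
    · simp [Equiv.arrowCongr]
    · exact (hw (Equiv.swap k ⟨0, hm⟩) j).symm
  calc ∑ j, multIdx j i * w j = ∑ j, ∑ k, if j k = i then w j else 0 := by
        refine sum_congr rfl fun j _ => ?_
        rw [← sum_filter, sum_const, nsmul_eq_mul, multIdx]
    _ = ∑ k, ∑ j with j k = i, w j := by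
        rw [sum_comm]
        simp only [sum_filter]
    _ = m * sliceSum hm w i := by
        rw [sum_congr rfl fun k _ => hslot k, sum_const, card_univ, Fintype.card_fin,
          nsmul_eq_mul]

lemma IsSymmetric.sliceSum_eq_sum_edges (hm : 0 < m) (hw : IsSymmetric w)
    (hdiag : ∀ q, w (diagIdx q) = 0) (i : Fin n) :
    sliceSum hm w i = ∑ j ∈ edges m n with i ∈ suppIdx j, rearrCountAt j i * w j := by
  have hsymm : IsSymmetric fun j => multIdx j i * w j := fun σ j => by
    simp only [multIdx_comp_perm, hw σ j]
  have hm_ne : (m : ℝ) ≠ 0 := by positivity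
  refine mul_left_cancel₀ hm_ne ?_
  rw [← hw.sum_multIdx_mul, hsymm.sum_eq_sum_edges fun q => by rw [hdiag, mul_zero], sum_filter,
    mul_sum]
  refine sum_congr rfl fun j _ => ?_
  split_ifs with hi
  · have hcount : (multIdx j i * rearrCount j : ℝ) = m * rearrCountAt j i := by
      exact_mod_cast multIdx_mul_rearrCount hi
    linear_combination w j * hcount
  · rw [Nat.eq_zero_of_not_pos (multIdx_pos_iff.not.2 hi)]
    ring

end SymmetricSums

section Scaling

variable {m n : ℕ} {A w : Idx m n → ℝ} {d : Fin n → ℝ}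

/-- The tensor with entries `w_{i₁…iₘ} d_{i₁} ⋯ d_{iₘ}`. -/
def scaleTensor (w : Idx m n → ℝ) (d : Fin n → ℝ) : Idx m n → ℝ := fun j => w j * ∏ k, d (j k)

/-- The absolute values of the off-diagonal entries, with zeros on the diagonal. -/
def offDiagAbs (A : Idx m n → ℝ) : Idx m n → ℝ := fun j => if ∃ q, j = diagIdx q then 0 else |A j|

protected lemma IsSymmetric.scaleTensor (hw : IsSymmetric w) (d : Fin n → ℝ) :
    IsSymmetric (scaleTensor w d) := fun σ j => by
  simp only [scaleTensor, hw σ j, Function.comp_apply, Equiv.prod_comp σ fun k => d (j k)]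

protected lemma IsSymmetric.offDiagAbs (hA : IsSymmetric A) : IsSymmetric (offDiagAbs A) := by
  intro σ j
  have hdiag (q : Fin n) : j ∘ σ = diagIdx q ↔ j = diagIdx q := by
    rw [← σ.surjective.injective_comp_right.eq_iff (a := j)]
    rfl
  simp only [offDiagAbs, hdiag, hA σ j]

lemma offDiagAbs_nonneg (A : Idx m n → ℝ) (j : Idx m n) : 0 ≤ offDiagAbs A j := by
  unfold offDiagAbs
  split_ifs <;> positivity

lemma offDiagAbs_diagIdx (A : Idx m n → ℝ) (q : Fin n) : offDiagAbs A (diagIdx q) = 0 :=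
  if_pos ⟨q, rfl⟩

lemma offDiagAbs_of_mem_edges {j : Idx m n} (hj : j ∈ edges m n) : offDiagAbs A j = |A j| :=
  if_neg (mem_edges.1 hj).2

lemma scaleTensor_nonneg (hw : ∀ j, 0 ≤ w j) (hd : ∀ i, 0 ≤ d i) (j : Idx m n) :
    0 ≤ scaleTensor w d j :=
  mul_nonneg (hw j) (prod_nonneg fun k _ => hd (j k))

lemma scaleTensor_diagIdx (w : Idx m n → ℝ) (d : Fin n → ℝ) (q : Fin n) :
    scaleTensor w d (diagIdx q) = w (diagIdx q) * d q ^ m := by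
  simp [scaleTensor, diagIdx]

lemma scaleTensor_offDiagAbs_diagIdx (A : Idx m n → ℝ) (d : Fin n → ℝ) (q : Fin n) :
    scaleTensor (offDiagAbs A) d (diagIdx q) = 0 := by
  rw [scaleTensor_diagIdx, offDiagAbs_diagIdx, zero_mul]

lemma offDiagAbs_scaleTensor (hd : ∀ i, 0 ≤ d i) :
    offDiagAbs (scaleTensor A d) = scaleTensor (offDiagAbs A) d := by
  funext j
  simp only [offDiagAbs, scaleTensor, abs_mul, abs_of_nonneg (prod_nonneg fun k _ => hd (j k)),
    ite_mul, zero_mul]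

lemma rowSum_eq_sliceSum_offDiagAbs (hm : 0 < m) (A : Idx m n → ℝ) (i : Fin n) :
    rowSum hm A i = sliceSum hm (offDiagAbs A) i := by
  rw [rowSum, sliceSum, ← filter_filter, sum_filter]
  refine sum_congr rfl fun j hj => ?_
  have hdiag : (∃ q, j = diagIdx q) ↔ j = diagIdx i := by
    refine ⟨?_, fun h => ⟨i, h⟩⟩
    rintro ⟨q, rfl⟩
    exact congrArg diagIdx (mem_filter.1 hj).2
  simp only [offDiagAbs, hdiag, ne_eq, ite_not]

lemma isDD_scaleTensor_iff (hm : 0 < m) (hdiag : ∀ i, 0 ≤ A (diagIdx i)) (hd : ∀ i, 0 ≤ d i) :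
    IsDD hm (scaleTensor A d) ↔
      ∀ i, sliceSum hm (scaleTensor (offDiagAbs A) d) i ≤ A (diagIdx i) * d i ^ m := by
  refine forall_congr' fun i => ?_
  rw [rowSum_eq_sliceSum_offDiagAbs, offDiagAbs_scaleTensor hd, scaleTensor_diagIdx,
    abs_of_nonneg (mul_nonneg (hdiag i) (pow_nonneg (hd i) m))]

end Scaling

section Certificate

variable {m n : ℕ} {A : Idx m n → ℝ} {b : Idx m n → Fin n → ℝ} {d : Fin n → ℝ}

/-- The numbers `b j p`, for `p` occurring in an edge `j`, split the diagonal entries of `A` among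
the edges so that every edge `j` receives enough to dominate its entry `A j`. The values of `b` at
other arguments are irrelevant. -/
structure IsPowerConeCertificate (A : Idx m n → ℝ) (b : Idx m n → Fin n → ℝ) : Prop where
  nonneg : ∀ j ∈ edges m n, ∀ p ∈ suppIdx j, 0 ≤ b j p
  le_prod : ∀ j ∈ edges m n, cCoef j * |A j| ^ m ≤ ∏ p ∈ suppIdx j, b j p ^ multIdx j p
  sum_le : ∀ i, ∑ j ∈ edges m n with i ∈ suppIdx j, b j i ≤ A (diagIdx i)

open scoped Classical in
lemma isPowerConeCertificate_iff (A : Idx m n → ℝ) (b : Idx m n → Fin n → ℝ) :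
    IsPowerConeCertificate A b ↔
      (∀ jh : Idx m n, Monotone jh → (¬ ∃ q : Fin n, jh = diagIdx q) →
        ∀ p ∈ suppIdx jh, 0 ≤ b jh p) ∧
      (∀ jh : Idx m n, Monotone jh → (¬ ∃ q : Fin n, jh = diagIdx q) →
        (cCoef jh : ℝ) * |A jh| ^ m ≤ ∏ p ∈ suppIdx jh, (b jh p) ^ multIdx jh p) ∧
      (∀ i : Fin n,
        (∑ jh : Idx m n,
          if Monotone jh ∧ (¬ ∃ q : Fin n, jh = diagIdx q) ∧ i ∈ suppIdx jh
          then b jh i else 0) ≤ A (diagIdx i)) := by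
  have hsum (i : Fin n) : ∑ j ∈ edges m n with i ∈ suppIdx j, b j i = ∑ j : Idx m n,
      if Monotone j ∧ (¬ ∃ q : Fin n, j = diagIdx q) ∧ i ∈ suppIdx j then b j i else 0 := by
    rw [← sum_filter]
    refine sum_congr ?_ fun _ _ => rfl
    ext j
    simp only [mem_filter, mem_edges, mem_univ, true_and, and_assoc]
  simp only [← hsum, ← and_imp, ← mem_edges]
  exact ⟨fun h => ⟨h.nonneg, h.le_prod, h.sum_le⟩, fun ⟨h₁, h₂, h₃⟩ => ⟨h₁, h₂, h₃⟩⟩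

lemma IsPowerConeCertificate.diag_nonneg (hb : IsPowerConeCertificate A b) (i : Fin n) :
    0 ≤ A (diagIdx i) :=
  (sum_nonneg fun j hj => hb.nonneg j (mem_filter.1 hj).1 i (mem_filter.1 hj).2).trans
    (hb.sum_le i)

lemma prod_rearrCountAt_mul_div (j : Idx m n) (s : ℝ) (d : Fin n → ℝ) :
    ∏ p ∈ suppIdx j, (rearrCountAt j p * s / d p ^ m) ^ multIdx j p =
      cCoef j * (s / ∏ k, d (j k)) ^ m := by
  rw [prod_suppIdx_pow_multIdx, cCoef_eq_prod_rearrCountAt, prod_div_distrib, prod_mul_distrib,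
    prod_const, card_univ, Fintype.card_fin, prod_pow, Nat.cast_prod, div_pow, mul_div_assoc]

lemma IsSymmetric.isPowerConeCertificate_of_sliceSum_le (hm : 0 < m) (hA : IsSymmetric A)
    (hd : ∀ i, 0 < d i)
    (hdom : ∀ i, sliceSum hm (scaleTensor (offDiagAbs A) d) i ≤ A (diagIdx i) * d i ^ m) :
    IsPowerConeCertificate A
      fun j p => rearrCountAt j p * scaleTensor (offDiagAbs A) d j / d p ^ m where
  nonneg j _ p _ := by
    have hscale := scaleTensor_nonneg (offDiagAbs_nonneg A) (fun i => (hd i).le) j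
    have hdp := hd p
    positivity
  le_prod j hj := by
    have hprod : ∏ k, d (j k) ≠ 0 := prod_ne_zero_iff.2 fun k _ => (hd (j k)).ne'
    rw [prod_rearrCountAt_mul_div, scaleTensor, mul_div_cancel_right₀ _ hprod,
      offDiagAbs_of_mem_edges hj]
  sum_le i := by
    rw [← sum_div, ← (hA.offDiagAbs.scaleTensor d).sliceSum_eq_sum_edges hm
      (scaleTensor_offDiagAbs_diagIdx A d)]
    exact (div_le_iff₀ (pow_pos (hd i) m)).2 (hdom i)

lemma rearrCount_mul_le_sum_of_cCoef_mul_pow_le_prod (hm : 0 < m) (j : Idx m n) {a : ℝ}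
    {β : Fin n → ℝ} (hβ : ∀ p ∈ suppIdx j, 0 ≤ β p)
    (h : cCoef j * a ^ m ≤ ∏ p ∈ suppIdx j, β p ^ multIdx j p) :
    rearrCount j * a ≤ ∑ p ∈ suppIdx j, β p := by
  have hm_pos : (0 : ℝ) < m := by exact_mod_cast hm
  have hmult (k : Fin m) : (0 : ℝ) < multIdx j (j k) := by
    exact_mod_cast multIdx_pos_iff.2 (apply_mem_suppIdx j k)
  have hz (k : Fin m) : 0 ≤ β (j k) / multIdx j (j k) :=
    div_nonneg (hβ _ (apply_mem_suppIdx j k)) (hmult k).le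
  have hcount (k : Fin m) :
      (rearrCountAt j (j k) : ℝ) = rearrCount j / m * multIdx j (j k) := by
    have hcount_nat : (multIdx j (j k) * rearrCount j : ℝ) = m * rearrCountAt j (j k) := by
      exact_mod_cast multIdx_mul_rearrCount (apply_mem_suppIdx j k)
    field_simp
    linarith
  have hcCoef : (cCoef j : ℝ) = (rearrCount j / m) ^ m * ∏ k, (multIdx j (j k) : ℝ) := by
    simp only [cCoef_eq_prod_rearrCountAt, Nat.cast_prod, hcount, prod_mul_distrib, prod_const,
      card_univ, Fintype.card_fin]
  have hpow : (rearrCount j / m * a) ^ m ≤ ((∑ p ∈ suppIdx j, β p) / m) ^ m :=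
    calc (rearrCount j / m * a) ^ m ≤ ∏ k, β (j k) / multIdx j (j k) := by
          rw [prod_div_distrib, le_div_iff₀ (prod_pos fun k _ => hmult k),
            ← prod_suppIdx_pow_multIdx]
          refine le_of_eq_of_le ?_ h
          rw [hcCoef]
          ring
      _ ≤ ((∑ p ∈ suppIdx j, β p) / m) ^ m := by
          have hne : (univ : Finset (Fin m)).Nonempty := ⟨⟨0, hm⟩, mem_univ _⟩
          simpa [← sum_suppIdx_eq_sum_div] using
            prod_le_arith_mean_pow_card hne fun k _ => hz k
  have hroot := le_of_pow_le_pow_left₀ hm.ne' (div_nonneg (sum_nonneg hβ) hm_pos.le) hpow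
  rwa [div_mul_eq_mul_div, div_le_div_iff_of_pos_right hm_pos] at hroot

lemma IsPowerConeCertificate.sum_scaleTensor_offDiagAbs_le (hm : 0 < m) (hA : IsSymmetric A)
    (hb : IsPowerConeCertificate A b) {x : Fin n → ℝ} (hx : ∀ i, 0 ≤ x i) :
    ∑ j, scaleTensor (offDiagAbs A) x j ≤ ∑ i, A (diagIdx i) * x i ^ m := by
  have hedge (j : Idx m n) (hj : j ∈ edges m n) :
      rearrCount j * scaleTensor (offDiagAbs A) x j ≤ ∑ p ∈ suppIdx j, b j p * x p ^ m := by
    refine rearrCount_mul_le_sum_of_cCoef_mul_pow_le_prod hm j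
      (fun p hp => mul_nonneg (hb.nonneg j hj p hp) (pow_nonneg (hx p) m)) ?_
    calc cCoef j * scaleTensor (offDiagAbs A) x j ^ m
        = cCoef j * |A j| ^ m * ∏ k, x (j k) ^ m := by
          rw [scaleTensor, offDiagAbs_of_mem_edges hj, mul_pow, prod_pow, mul_assoc]
      _ ≤ (∏ p ∈ suppIdx j, b j p ^ multIdx j p) * ∏ k, x (j k) ^ m :=
          mul_le_mul_of_nonneg_right (hb.le_prod j hj)
            (prod_nonneg fun k _ => pow_nonneg (hx (j k)) m)
      _ = ∏ p ∈ suppIdx j, (b j p * x p ^ m) ^ multIdx j p := by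
          simp only [prod_suppIdx_pow_multIdx, prod_mul_distrib]
  calc ∑ j, scaleTensor (offDiagAbs A) x j
      = ∑ j ∈ edges m n, rearrCount j * scaleTensor (offDiagAbs A) x j :=
        (hA.offDiagAbs.scaleTensor x).sum_eq_sum_edges (scaleTensor_offDiagAbs_diagIdx A x)
    _ ≤ ∑ j ∈ edges m n, ∑ p ∈ suppIdx j, b j p * x p ^ m := sum_le_sum hedge
    _ = ∑ i, (∑ j ∈ edges m n with i ∈ suppIdx j, b j i) * x i ^ m := by
        simp only [sum_mul]
        exact sum_comm' fun j p => by simp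
    _ ≤ ∑ i, A (diagIdx i) * x i ^ m :=
        sum_le_sum fun i _ => mul_le_mul_of_nonneg_right (hb.sum_le i) (pow_nonneg (hx i) m)

end Certificate

section Potential

variable {m n : ℕ} {a c : Fin n → ℝ} {w : Idx m n → ℝ}

lemma scaleTensor_exp (w : Idx m n → ℝ) (y : Fin n → ℝ) (j : Idx m n) :
    scaleTensor w (fun i => Real.exp (y i)) j = w j * Real.exp (∑ k, y (j k)) := by
  rw [scaleTensor, Real.exp_sum]

/-- The form `∑ cᵢ xᵢᵐ - ∑ w_{i₁…iₘ} x_{i₁} ⋯ x_{iₘ}` with the logarithmic barrier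
`-m ∑ log xᵢ`, in the coordinates `y = log x`. -/
noncomputable def barrierForm (c : Fin n → ℝ) (w : Idx m n → ℝ) (y : Fin n → ℝ) : ℝ :=
  ∑ i, (c i * Real.exp (m * y i) - m * y i) - ∑ j, w j * Real.exp (∑ k, y (j k))

lemma continuous_barrierForm (c : Fin n → ℝ) (w : Idx m n → ℝ) : Continuous (barrierForm c w) := by
  unfold barrierForm
  fun_prop

lemma norm_sub_le_barrierForm (hm : 0 < m)
    (hform : ∀ x : Fin n → ℝ, (∀ i, 0 < x i) → ∑ j, scaleTensor w x j ≤ ∑ i, a i * x i ^ m)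
    {ε : ℝ} (hε : 0 < ε) (y : Fin n → ℝ) :
    ‖y‖ - n * (2 / ε) ≤ barrierForm (fun i => a i + ε) w y := by
  have hm_one : (1 : ℝ) ≤ m := by exact_mod_cast hm
  have hnorm : ‖y‖ ≤ ∑ i, |m * y i| := by
    refine (pi_norm_le_iff_of_nonneg (sum_nonneg fun i _ => abs_nonneg _)).2 fun i => ?_
    calc ‖y i‖ ≤ m * |y i| := le_mul_of_one_le_left (abs_nonneg _) hm_one
      _ = |m * y i| := by rw [abs_mul, Nat.abs_cast]
      _ ≤ ∑ i, |m * y i| :=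
        single_le_sum (f := fun i => |m * y i|) (fun i _ => abs_nonneg _) (mem_univ i)
  have hbarrier : ∑ i, (|m * y i| - 2 / ε) ≤ ∑ i, (ε * Real.exp (m * y i) - m * y i) :=
    sum_le_sum fun i _ => abs_sub_two_div_le_mul_exp_sub hε (m * y i)
  have hform_exp : ∑ j, w j * Real.exp (∑ k, y (j k)) ≤ ∑ i, a i * Real.exp (m * y i) := by
    simpa only [scaleTensor_exp, Real.exp_nat_mul] using
      hform (fun i => Real.exp (y i)) fun i => Real.exp_pos _
  simp only [barrierForm, add_mul, add_sub_assoc, sum_add_distrib]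
  rw [sum_sub_distrib, sum_const, card_univ, Fintype.card_fin, nsmul_eq_mul] at hbarrier
  linarith

lemma hasDerivAt_barrierForm_add_mul (c : Fin n → ℝ) (w : Idx m n → ℝ) (y v : Fin n → ℝ) :
    HasDerivAt (fun t : ℝ => barrierForm c w fun p => y p + t * v p)
      (∑ p, (c p * (Real.exp (m * y p) * (m * v p)) - m * v p) -
        ∑ j, w j * (Real.exp (∑ k, y (j k)) * ∑ k, v (j k))) 0 := by
  have hline (p : Fin n) : HasDerivAt (fun t : ℝ => y p + t * v p) (v p) 0 := by
    simpa using ((hasDerivAt_id (0 : ℝ)).mul_const (v p)).const_add (y p)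
  refine (HasDerivAt.fun_sum fun p _ => ?_).sub (HasDerivAt.fun_sum fun j _ => ?_)
  · have hmul := (hline p).const_mul (m : ℝ)
    simpa using (hmul.exp.const_mul (c p)).fun_sub hmul
  · have hsum : HasDerivAt (fun t : ℝ => ∑ k, (y (j k) + t * v (j k))) (∑ k, v (j k)) 0 :=
      HasDerivAt.fun_sum fun k _ => hline (j k)
    simpa using hsum.exp.const_mul (w j)

lemma IsSymmetric.sliceSum_scaleTensor_exp_of_forall_barrierForm_le (hm : 0 < m)
    (hw : IsSymmetric w) {y : Fin n → ℝ} (hy : ∀ z, barrierForm c w y ≤ barrierForm c w z)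
    (i : Fin n) :
    sliceSum hm (scaleTensor w fun i => Real.exp (y i)) i = c i * Real.exp (m * y i) - 1 := by
  set v : Fin n → ℝ := Pi.single i 1 with hv
  have hmin : IsLocalMin (fun t : ℝ => barrierForm c w fun p => y p + t * v p) 0 :=
    Filter.Eventually.of_forall fun t => by simpa using hy _
  have hcritical := hmin.hasDerivAt_eq_zero (hasDerivAt_barrierForm_add_mul c w y v)
  have hdiag : ∑ p, (c p * (Real.exp (m * y p) * (m * v p)) - m * v p) =
      m * (c i * Real.exp (m * y i) - 1) := by
    rw [sum_eq_single_of_mem i (mem_univ i) fun p _ hp => by simp [hv, hp], hv,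
      Pi.single_eq_same]
    ring
  have hoff : ∑ j, w j * (Real.exp (∑ k, y (j k)) * ∑ k, v (j k)) =
      m * sliceSum hm (scaleTensor w fun i => Real.exp (y i)) i := by
    rw [← (hw.scaleTensor _).sum_multIdx_mul]
    refine sum_congr rfl fun j _ => ?_
    have hmult : ∑ k, v (j k) = multIdx j i := by simp [hv, Pi.single_apply, multIdx]
    rw [hmult, scaleTensor_exp]
    ring
  have hm_ne : (m : ℝ) ≠ 0 := by positivity
  rw [hdiag, hoff, ← mul_sub, mul_eq_zero] at hcritical
  linarith [hcritical.resolve_left hm_ne]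

lemma IsSymmetric.exists_sliceSum_scaleTensor_exp_le_add (hm : 0 < m) (hw : IsSymmetric w)
    (hform : ∀ x : Fin n → ℝ, (∀ i, 0 < x i) → ∑ j, scaleTensor w x j ≤ ∑ i, a i * x i ^ m)
    {ε : ℝ} (hε : 0 < ε) :
    ∃ y : Fin n → ℝ, ∀ i,
      sliceSum hm (scaleTensor w fun i => Real.exp (y i)) i ≤ (a i + ε) * Real.exp (m * y i) := by
  have hcoercive : Filter.Tendsto (barrierForm (fun i => a i + ε) w) (Filter.cocompact _)
      Filter.atTop :=
    Filter.tendsto_atTop_mono (norm_sub_le_barrierForm hm hform hε)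
      (Filter.tendsto_atTop_add_const_right _ _ tendsto_norm_cocompact_atTop)
  obtain ⟨y, hy⟩ := (continuous_barrierForm _ w).exists_forall_le hcoercive
  refine ⟨y, fun i => ?_⟩
  rw [hw.sliceSum_scaleTensor_exp_of_forall_barrierForm_le hm hy]
  linarith

end Potential

section Limit

variable {m n : ℕ} {a : Fin n → ℝ} {w : Idx m n → ℝ}

/-- The logarithms `∑ₖ y_{jₖ} - m y_{j₀}` of the factors by which the scaling by `x = exp y`
followed by division of slice `i` by `xᵢᵐ` multiplies the entries of `w`. Zero entries are
discarded, because their factors are not controlled by the slice sums. -/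
noncomputable def logFactor (hm : 0 < m) (w : Idx m n → ℝ) : (Fin n → ℝ) →ₗ[ℝ] (Idx m n → ℝ) :=
  LinearMap.pi fun j => if w j = 0 then 0 else
    ∑ k, LinearMap.proj (j k) - (m : ℝ) • LinearMap.proj (j ⟨0, hm⟩)

lemma logFactor_apply (hm : 0 < m) (w : Idx m n → ℝ) (y : Fin n → ℝ) (j : Idx m n) :
    logFactor hm w y j = if w j = 0 then 0 else ∑ k, y (j k) - m * y (j ⟨0, hm⟩) := by
  rw [logFactor, LinearMap.pi_apply]
  split_ifs <;> simp

lemma sliceSum_scaleTensor_exp (hm : 0 < m) (w : Idx m n → ℝ) (y : Fin n → ℝ) (i : Fin n) :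
    sliceSum hm (scaleTensor w fun i => Real.exp (y i)) i =
      sliceSum hm (fun j => w j * Real.exp (logFactor hm w y j)) i * Real.exp (m * y i) := by
  simp only [sliceSum, sum_mul]
  refine sum_congr rfl fun j hj => ?_
  by_cases hwj : w j = 0
  · simp [scaleTensor, hwj]
  · rw [scaleTensor_exp, logFactor_apply, if_neg hwj, (mem_filter.1 hj).2, mul_assoc,
      ← Real.exp_add, sub_add_cancel]

lemma IsSymmetric.sum_logFactor_comp_swap (hm : 0 < m) (hw : IsSymmetric w) (y : Fin n → ℝ)
    (j : Idx m n) : ∑ k, logFactor hm w y (j ∘ Equiv.swap ⟨0, hm⟩ k) = 0 := by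
  have hperm (k : Fin m) : ∑ l, y (j (Equiv.swap ⟨0, hm⟩ k l)) = ∑ l, y (j l) :=
    Equiv.sum_comp (Equiv.swap ⟨0, hm⟩ k) fun l => y (j l)
  simp only [logFactor_apply, hw _ j, Function.comp_apply, Equiv.swap_apply_left, hperm]
  split_ifs
  · exact sum_const_zero
  · rw [sum_sub_distrib, ← mul_sum]
    simp

lemma IsSymmetric.neg_mul_le_logFactor (hm : 0 < m) (hw : IsSymmetric w) {y : Fin n → ℝ} {M : ℝ}
    (hM : ∀ j, logFactor hm w y j ≤ M) (j : Idx m n) :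
    -((m - 1 : ℕ) * M) ≤ logFactor hm w y j := by
  have hzero := hw.sum_logFactor_comp_swap hm y j
  rw [← add_sum_erase _ _ (mem_univ (⟨0, hm⟩ : Fin m)), Equiv.swap_self, Equiv.coe_refl,
    Function.comp_id] at hzero
  have hother := sum_le_card_nsmul (univ.erase (⟨0, hm⟩ : Fin m))
    (fun k => logFactor hm w y (j ∘ Equiv.swap ⟨0, hm⟩ k)) M fun k _ => hM _
  rw [card_erase_of_mem (mem_univ _), card_univ, Fintype.card_fin, nsmul_eq_mul] at hother
  linarith

lemma exists_forall_logFactor_le (hm : 0 < m) (hw : ∀ j, 0 ≤ w j) (c : Fin n → ℝ) :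
    ∃ M, ∀ y, (∀ i, sliceSum hm (fun j => w j * Real.exp (logFactor hm w y j)) i ≤ c i) →
      ∀ j, logFactor hm w y j ≤ M := by
  obtain ⟨M, hM⟩ := (Set.finite_range fun j : Idx m n => c (j ⟨0, hm⟩) / w j).bddAbove
  refine ⟨M, fun y hy j => le_trans ?_ (hM ⟨j, rfl⟩)⟩
  rcases (hw j).eq_or_lt with hwj | hwj
  · simp [logFactor_apply, ← hwj]
  · have hentry : w j * Real.exp (logFactor hm w y j) ≤ c (j ⟨0, hm⟩) :=
      (single_le_sum (f := fun j => w j * Real.exp (logFactor hm w y j))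
        (fun l _ => mul_nonneg (hw l) (Real.exp_pos _).le) (by simp)).trans (hy (j ⟨0, hm⟩))
    calc logFactor hm w y j ≤ Real.exp (logFactor hm w y j) := by
          linarith [Real.add_one_le_exp (logFactor hm w y j)]
      _ ≤ c (j ⟨0, hm⟩) / w j := by rwa [le_div_iff₀' hwj]

lemma IsSymmetric.isCompact_logFactor_sublevel (hm : 0 < m) (hw : IsSymmetric w)
    (hw_nonneg : ∀ j, 0 ≤ w j) (c : Fin n → ℝ) :
    IsCompact {u : Idx m n → ℝ | u ∈ LinearMap.range (logFactor hm w) ∧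
      ∀ i, sliceSum hm (fun j => w j * Real.exp (u j)) i ≤ c i} := by
  obtain ⟨M, hM⟩ := exists_forall_logFactor_le hm hw_nonneg c
  refine (isCompact_Icc (a := fun _ : Idx m n => -((m - 1 : ℕ) * M))
    (b := fun _ => M)).of_isClosed_subset ?_ ?_
  · have hrange : IsClosed (LinearMap.range (logFactor hm w) : Set (Idx m n → ℝ)) :=
      Submodule.closed_of_finiteDimensional _
    have hslices : IsClosed {u : Idx m n → ℝ | ∀ i,
        sliceSum hm (fun j => w j * Real.exp (u j)) i ≤ c i} := by
      simp only [Set.ofPred_forall]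
      refine isClosed_iInter fun i => isClosed_le ?_ continuous_const
      unfold sliceSum
      fun_prop
    exact hrange.inter hslices
  · rintro _ ⟨⟨y, rfl⟩, hy⟩
    exact ⟨hw.neg_mul_le_logFactor hm (hM y hy), hM y hy⟩

theorem IsSymmetric.exists_sliceSum_scaleTensor_exp_le (hm : 0 < m) (hw : IsSymmetric w)
    (hw_nonneg : ∀ j, 0 ≤ w j)
    (hform : ∀ x : Fin n → ℝ, (∀ i, 0 < x i) → ∑ j, scaleTensor w x j ≤ ∑ i, a i * x i ^ m) :
    ∃ y : Fin n → ℝ, ∀ i,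
      sliceSum hm (scaleTensor w fun i => Real.exp (y i)) i ≤ a i * Real.exp (m * y i) := by
  let K : ℕ → Set (Idx m n → ℝ) := fun N => {u | u ∈ LinearMap.range (logFactor hm w) ∧
    ∀ i, sliceSum hm (fun j => w j * Real.exp (u j)) i ≤ a i + 1 / ((N : ℝ) + 1)}
  have hcompact (N : ℕ) : IsCompact (K N) := hw.isCompact_logFactor_sublevel hm hw_nonneg _
  have hanti (N : ℕ) : K (N + 1) ⊆ K N := fun u hu =>
    ⟨hu.1, fun i => (hu.2 i).trans (by gcongr; simp)⟩
  have hne (N : ℕ) : (K N).Nonempty := by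
    obtain ⟨y, hy⟩ := hw.exists_sliceSum_scaleTensor_exp_le_add hm hform
      (Nat.one_div_pos_of_nat (α := ℝ) (n := N))
    refine ⟨_, ⟨y, rfl⟩, fun i => ?_⟩
    simpa only [sliceSum_scaleTensor_exp, mul_le_mul_iff_left₀ (Real.exp_pos _)] using hy i
  obtain ⟨u, hu⟩ := IsCompact.nonempty_iInter_of_sequence_nonempty_isCompact_isClosed K hanti hne
    (hcompact 0) fun N => (hcompact N).isClosed
  rw [Set.mem_iInter] at hu
  obtain ⟨y, rfl⟩ := (hu 0).1
  refine ⟨y, fun i => ?_⟩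
  rw [sliceSum_scaleTensor_exp]
  refine mul_le_mul_of_nonneg_right ?_ (Real.exp_pos _).le
  have hlim : Filter.Tendsto (fun N : ℕ => a i + 1 / ((N : ℝ) + 1)) Filter.atTop
      (nhds (a i + 0)) := tendsto_one_div_add_atTop_nhds_zero_nat.const_add (a i)
  rw [add_zero] at hlim
  exact ge_of_tendsto' hlim fun N => (hu N).2 i

end Limit

open scoped Classical in
/-- New characterization of symmetric `H⁺`-tensors: `A` is `GDD⁺` iff there exist
nonnegative reals `b^{i⃗}_j` (for each nondecreasing non-constant multi-index `i⃗` and each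
`j` appearing in `i⃗`) with `∏_k (b^{i⃗}_{j_k})^{α_k} ≥ c(i⃗) |a_{i⃗}|^m` for each such `i⃗`,
and `a_{jj…j} ≥ ∑_{i⃗ ∋ j} b^{i⃗}_j` for each `j`. -/
theorem GDDplus_iff_powercone (m n : ℕ) (hm : 0 < m) (A : Idx m n → ℝ)
    (hsym : IsSymmetric A) :
    IsGDDplus hm A ↔
      ∃ b : Idx m n → Fin n → ℝ,
        (∀ jh : Idx m n, Monotone jh → (¬ ∃ q : Fin n, jh = diagIdx q) →
          ∀ p ∈ suppIdx jh, 0 ≤ b jh p) ∧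
        (∀ jh : Idx m n, Monotone jh → (¬ ∃ q : Fin n, jh = diagIdx q) →
          (cCoef jh : ℝ) * |A jh| ^ m ≤ ∏ p ∈ suppIdx jh, (b jh p) ^ multIdx jh p) ∧
        (∀ i : Fin n,
          (∑ jh : Idx m n,
            if Monotone jh ∧ (¬ ∃ q : Fin n, jh = diagIdx q) ∧ i ∈ suppIdx jh
            then b jh i else 0) ≤ A (diagIdx i)) := by
  refine Iff.trans ⟨?_, ?_⟩ (exists_congr fun b => isPowerConeCertificate_iff A b)
  · rintro ⟨-, hdiag, d, hd, hdom⟩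
    have hslice := (isDD_scaleTensor_iff hm hdiag fun i => (hd i).le).1 hdom
    exact ⟨_, hsym.isPowerConeCertificate_of_sliceSum_le hm hd hslice⟩
  · rintro ⟨b, hb⟩
    obtain ⟨y, hy⟩ := hsym.offDiagAbs.exists_sliceSum_scaleTensor_exp_le hm (offDiagAbs_nonneg A)
      fun x hx => hb.sum_scaleTensor_offDiagAbs_le hm hsym fun i => (hx i).le
    refine ⟨hsym, hb.diag_nonneg, fun i => Real.exp (y i), fun i => Real.exp_pos _, ?_⟩
    refine (isDD_scaleTensor_iff hm hb.diag_nonneg fun i => (Real.exp_pos _).le).2 fun i => ?_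
    simpa only [Real.exp_nat_mul] using hy i
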